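/- The triple (T_•, ∗̂, δ̄) is a graded connected Hopf algebra over ℤ: (T_•, ∗̂) is a graded associative unital algebra, δ̄ is a coassociative counital coproduct, δ̄ is an algebra homomorphism from (T_•, ∗̂) to its tensor square equipped with the componentwise product (that is, δ̄(x ∗̂ y) = δ̄(x) · δ̄(y)), the counit (projection onto T_0 ≅ ℤ) is an algebra homomorphism, and, T_• being graded with degree-0 component ℤ, an antipode exists. -/

import Mathlib

set_option maxHeartbeats 1000000

open Finset

/-- Candidate set compositions: lists of finite sets of positive naturals. -/
abbrev SC : Type := List (Finset ℕ)

/-- The underlying (ground) set of a list of blocks. -/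
def ground (L : SC) : Finset ℕ := L.foldr (· ∪ ·) ∅

/-- `L` is a set composition of `[n] = {1,…,n}`. -/
def IsSetComp (n : ℕ) (L : SC) : Prop :=
  (∀ B ∈ L, B.Nonempty) ∧ L.Pairwise Disjoint ∧ ground L = Finset.Icc 1 n

/-- The degree of a set composition (largest element of its ground set). -/
def maxG (L : SC) : ℕ := (ground L).sup id

/-- The 1-based rank of `x` inside the finite set `A` (the position of `x` in the
increasing enumeration of `A`, when `x ∈ A`); this is the order preserving
relabelling `A → [|A|]`. -/
def rankIn (A : Finset ℕ) (x : ℕ) : ℕ := (A.filter (· ≤ x)).card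

/-- `P|_A` : intersect the blocks with `A`, delete the empty intersections, and
relabel along the order preserving bijection `A → [|A|]`. -/
def restrictSC (A : Finset ℕ) (L : SC) : SC :=
  (L.map fun B => (B ∩ A).image (rankIn A)).filter fun B => decide B.Nonempty

/-- Shift all entries of all blocks by `p`. -/
def shiftSC (p : ℕ) (L : SC) : SC := L.map (Finset.image (· + p))

/-- The restricted product `∗̄` on set compositions:
`P ∗̄ Q = (P₁,…,P_k, p+Q₁,…,p+Q_l)` for `P ∈ Comp_p`. -/
def barMul (P Q : SC) : SC := P ++ shiftSC (maxG P) Q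

/-- The order-preserving relabelling map `S → T` (`is_{S,T}`), for finite sets
of equal cardinality. -/
def relabelFun (S T : Finset ℕ) (x : ℕ) : ℕ := (T.sort (· ≤ ·)).getD (rankIn S x - 1) 0

/-- Relabel a set composition of `S` along the order-preserving bijection `S → T`. -/
def relabelSC (S T : Finset ℕ) (L : SC) : SC := L.map (Finset.image (relabelFun S T))

variable (R : Type) [CommRing R]

/-- The free module with basis indexed by lists of blocks; the twisted descent
algebra `T_•` is its submodule spanned by the set compositions. -/
abbrev FM := SC →₀ R

/-- `T_•` as a submodule: the span of the set compositions. -/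
noncomputable def Tspan : Submodule R (FM R) :=
  Submodule.span R {f : FM R | ∃ n P, IsSetComp n P ∧ f = Finsupp.single P 1}

/-- The restricted product `∗̄` as a bilinear map. -/
noncomputable def barL : FM R →ₗ[R] FM R →ₗ[R] FM R :=
  Finsupp.lift _ R SC fun P => Finsupp.lift _ R SC fun Q => Finsupp.single (barMul P Q) 1

/-- The symmetrized product `∗̂` on basis elements:
`P ∗̂ Q = Σ is_{[p],A}(P) ∗ is_{[q],B}(Q)` over all `A ⊔ B = [p+q]`, `|A| = p`. -/
noncomputable def hatB (P Q : SC) : FM R :=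
  ∑ A ∈ (Finset.Icc 1 (maxG P + maxG Q)).powerset.filter (fun A => A.card = maxG P),
    Finsupp.single
      (relabelSC (Finset.Icc 1 (maxG P)) A P ++
        relabelSC (Finset.Icc 1 (maxG Q)) ((Finset.Icc 1 (maxG P + maxG Q)) \ A) Q) 1

/-- The symmetrized product `∗̂` as a bilinear map. -/
noncomputable def hatL : FM R →ₗ[R] FM R →ₗ[R] FM R :=
  Finsupp.lift _ R SC fun P => Finsupp.lift _ R SC fun Q => hatB R P Q

/-- `T_• ⊗ T_•`, realized as the free module on pairs of basis elements. -/
abbrev FM2 := (SC × SC) →₀ R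

/-- `T_• ⊗ T_• ⊗ T_•`, realized as the free module on triples of basis elements. -/
abbrev FM3 := (SC × SC × SC) →₀ R

/-- The restricted coproduct `δ̄ (P) = Σ_{p=0}^n P|_{[p]} ⊗ P|_{{p+1,…,n}}`. -/
noncomputable def dBarL : FM R →ₗ[R] FM2 R :=
  Finsupp.lift _ R SC fun P =>
    ∑ p ∈ Finset.range (maxG P + 1),
      Finsupp.single
        (restrictSC (Finset.Icc 1 p) P, restrictSC (Finset.Icc (p+1) (maxG P)) P) 1

/-- The cosymmetrized coproduct `δ̂ (P) = Σ_{A ⊔ B = [n]} P|_A ⊗ P|_B`. -/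
noncomputable def dHatL : FM R →ₗ[R] FM2 R :=
  Finsupp.lift _ R SC fun P =>
    ∑ A ∈ (Finset.Icc 1 (maxG P)).powerset,
      Finsupp.single (restrictSC A P, restrictSC ((Finset.Icc 1 (maxG P)) \ A) P) 1

/-- Apply a coproduct to the first tensor factor:  `d ⊗ id : T⊗T → T⊗T⊗T`. -/
noncomputable def applyFst (d : FM R →ₗ[R] FM2 R) : FM2 R →ₗ[R] FM3 R :=
  Finsupp.lift _ R (SC × SC) fun PQ =>
    Finsupp.mapDomain (fun RS : SC × SC => (RS.1, RS.2, PQ.2)) (d (Finsupp.single PQ.1 1))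

/-- Apply a coproduct to the second tensor factor:  `id ⊗ d : T⊗T → T⊗T⊗T`. -/
noncomputable def applySnd (d : FM R →ₗ[R] FM2 R) : FM2 R →ₗ[R] FM3 R :=
  Finsupp.lift _ R (SC × SC) fun PQ =>
    Finsupp.mapDomain (fun RS : SC × SC => (PQ.1, RS.1, RS.2)) (d (Finsupp.single PQ.2 1))

/-- `ε ⊗ id : T⊗T → T`, where `ε` is the projection onto `T_0 ≅ R`
(the coefficient of the empty set composition). -/
noncomputable def epsFst : FM2 R →ₗ[R] FM R :=
  Finsupp.lift _ R (SC × SC) fun PQ =>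
    if PQ.1 = ([] : SC) then Finsupp.single PQ.2 1 else 0

/-- `id ⊗ ε : T⊗T → T`. -/
noncomputable def epsSnd : FM2 R →ₗ[R] FM R :=
  Finsupp.lift _ R (SC × SC) fun PQ =>
    if PQ.2 = ([] : SC) then Finsupp.single PQ.1 1 else 0

/-- The twist map `x ⊗ y ↦ y ⊗ x` on `T_• ⊗ T_•`. -/
noncomputable def twistL : FM2 R →ₗ[R] FM2 R :=
  Finsupp.lift _ R (SC × SC) fun PQ => Finsupp.single (PQ.2, PQ.1) 1

/-- The counit: projection onto the degree-0 component `T_0 ≅ R`. -/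
noncomputable def counitL : FM R →ₗ[R] R :=
  Finsupp.lift _ R SC fun P => if P = ([] : SC) then 1 else 0

/-- The tensor product of two elements of `T_•`, inside `T_• ⊗ T_•`. -/
noncomputable def tensor2 (x y : FM R) : FM2 R :=
  x.sum fun U a => y.sum fun V b => Finsupp.single (U, V) (a * b)

/-- The componentwise product on `T_• ⊗ T_•` induced by the restricted
product `∗̄` : `(a ⊗ b) · (c ⊗ d) = (a ∗̄ c) ⊗ (b ∗̄ d)`. -/
noncomputable def mul2bar : FM2 R →ₗ[R] FM2 R →ₗ[R] FM2 R :=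
  Finsupp.lift _ R (SC × SC) fun PQ => Finsupp.lift _ R (SC × SC) fun RS =>
    Finsupp.single (barMul PQ.1 RS.1, barMul PQ.2 RS.2) 1

/-- The componentwise product on `T_• ⊗ T_•` induced by the symmetrized
product `∗̂` : `(a ⊗ b) · (c ⊗ d) = (a ∗̂ c) ⊗ (b ∗̂ d)`. -/
noncomputable def mul2hat : FM2 R →ₗ[R] FM2 R →ₗ[R] FM2 R :=
  Finsupp.lift _ R (SC × SC) fun PQ => Finsupp.lift _ R (SC × SC) fun RS =>
    tensor2 R (hatB R PQ.1 RS.1) (hatB R PQ.2 RS.2)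

/-- `m ∘ (S ⊗ id)` for the restricted product, used in the antipode axiom. -/
noncomputable def convBarFst (S : FM R →ₗ[R] FM R) : FM2 R →ₗ[R] FM R :=
  Finsupp.lift _ R (SC × SC) fun QR => barL R (S (Finsupp.single QR.1 1)) (Finsupp.single QR.2 1)

/-- `m ∘ (id ⊗ S)` for the restricted product, used in the antipode axiom. -/
noncomputable def convBarSnd (S : FM R →ₗ[R] FM R) : FM2 R →ₗ[R] FM R :=
  Finsupp.lift _ R (SC × SC) fun QR => barL R (Finsupp.single QR.1 1) (S (Finsupp.single QR.2 1))

/-- `m ∘ (S ⊗ id)` for the symmetrized product, used in the antipode axiom. -/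
noncomputable def convHatFst (S : FM R →ₗ[R] FM R) : FM2 R →ₗ[R] FM R :=
  Finsupp.lift _ R (SC × SC) fun QR => hatL R (S (Finsupp.single QR.1 1)) (Finsupp.single QR.2 1)

/-- `m ∘ (id ⊗ S)` for the symmetrized product, used in the antipode axiom. -/
noncomputable def convHatSnd (S : FM R →ₗ[R] FM R) : FM2 R →ₗ[R] FM R :=
  Finsupp.lift _ R (SC × SC) fun QR => hatL R (Finsupp.single QR.1 1) (S (Finsupp.single QR.2 1))

/-!
A word over a linearly ordered alphabet encodes a set composition, namely the sets of positions of
its letters in increasing order of the letters, and every set composition arises from words with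
arbitrarily large letters. Cutting a word in two restricts its set composition to an initial and a
final interval, so `δ̄` is deconcatenation. If every letter of `u` is smaller than every letter of
`v`, then concatenating the relabelled blocks of `u` and `v` amounts to shuffling their positions,
so `∗̂` is the shuffle product. The bialgebra axioms thus become those of the shuffle algebra. The
antipode is the convolution inverse of the identity: a recursion on the degree gives a left inverse,
which is two-sided because the identity can be cancelled on the right.
-/

/-- The words in an alphabet `α`. They are read from right to left: the letter `a` of `a :: w`
occupies position `w.length + 1`, so that prefixing a letter leaves the positions of all other
letters unchanged. -/
abbrev Word (α : Type*) := List α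

namespace Word

section Combinatorics

variable {α : Type*}

/-- The multiset of all shuffles of two words, which is their product in the shuffle algebra. -/
def shuffles : Word α → Word α → Multiset (Word α)
  | [], v => {v}
  | a :: u, [] => {a :: u}
  | a :: u, b :: v => (shuffles u (b :: v)).map (a :: ·) + (shuffles (a :: u) v).map (b :: ·)
termination_by u v => u.length + v.length

/-- The deconcatenation of a word: the pairs `(x, y)` of an initial factor `x` and the
complementary final factor `y`. As words are read from right to left, the word is `y ++ x`. -/
def splits : Word α → Multiset (Word α × Word α)
  | [] => {([], [])}
  | a :: w => (a :: w, []) ::ₘ (splits w).map (Prod.map id (a :: ·))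

@[simp]
theorem shuffles_nil_left (v : Word α) : shuffles [] v = {v} := by
  rw [shuffles]

@[simp]
theorem shuffles_nil_right (u : Word α) : shuffles u [] = {u} := by
  cases u <;> rw [shuffles]

theorem shuffles_cons_cons (a b : α) (u v : Word α) :
    shuffles (a :: u) (b :: v) =
      (shuffles u (b :: v)).map (a :: ·) + (shuffles (a :: u) v).map (b :: ·) := by
  rw [shuffles]

theorem shuffle_induction {p : Word α → Word α → Prop} (nil_left : ∀ v, p [] v)
    (nil_right : ∀ u, p u [])
    (cons_cons : ∀ a u b v, p u (b :: v) → p (a :: u) v → p (a :: u) (b :: v)) (u v : Word α) :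
    p u v := by
  induction u generalizing v with
  | nil => exact nil_left v
  | cons a u ihu =>
    induction v with
    | nil => exact nil_right _
    | cons b v ihv => exact cons_cons a u b v (ihu _) ihv

theorem perm_append_of_mem_shuffles {s u v : Word α} (hs : s ∈ shuffles u v) :
    s.Perm (u ++ v) := by
  induction u, v using shuffle_induction generalizing s with
  | nil_left v => simp_all
  | nil_right u => simp_all
  | cons_cons a u b v ihu ihv =>
    rw [shuffles_cons_cons, Multiset.mem_add, Multiset.mem_map, Multiset.mem_map] at hs
    obtain ⟨t, ht, rfl⟩ | ⟨t, ht, rfl⟩ := hs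
    · exact (ihu ht).cons a
    · exact ((ihv ht).cons b).trans List.perm_middle.symm

theorem length_of_mem_shuffles {s u v : Word α} (hs : s ∈ shuffles u v) :
    s.length = u.length + v.length := by
  rw [(perm_append_of_mem_shuffles hs).length_eq, List.length_append]

theorem mem_iff_of_mem_shuffles {s u v : Word α} (hs : s ∈ shuffles u v) {c : α} :
    c ∈ s ↔ c ∈ u ∨ c ∈ v := by
  rw [(perm_append_of_mem_shuffles hs).mem_iff, List.mem_append]

theorem shuffles_assoc (u v w : Word α) :
    (shuffles u v).bind (shuffles · w) = (shuffles v w).bind (shuffles u) := by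
  induction u generalizing v w with
  | nil => simp [Multiset.bind_singleton _ fun s => s]
  | cons a u ihu =>
    induction v generalizing w with
    | nil => simp
    | cons b v ihv =>
      induction w with
      | nil => simp [Multiset.bind_singleton _ fun s => s]
      | cons c w ihw =>
        have hu := ihu (b :: v) (c :: w)
        have hv := ihv (c :: w)
        have hw : (shuffles u (b :: v)).bind (fun s => shuffles (a :: s) w) +
            (shuffles (a :: u) v).bind (fun s => shuffles (b :: s) w) =
            (shuffles (b :: v) w).bind (shuffles (a :: u)) := by
          rw [← ihw, shuffles_cons_cons, Multiset.add_bind, Multiset.bind_map, Multiset.bind_map]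
        simp only [shuffles_cons_cons, Multiset.add_bind, Multiset.bind_map, Multiset.bind_add,
          ← Multiset.map_bind] at hu hv hw ⊢
        rw [hu, hv, ← hw]
        simp only [Multiset.map_add, Multiset.map_bind]
        abel

theorem append_of_mem_splits {w : Word α} {s : Word α × Word α} (hs : s ∈ splits w) :
    s.2 ++ s.1 = w := by
  induction w generalizing s with
  | nil => simp_all [splits]
  | cons a w ih =>
    rw [splits, Multiset.mem_cons, Multiset.mem_map] at hs
    obtain rfl | ⟨t, ht, rfl⟩ := hs
    · rfl
    · simp [ih ht]

theorem map_length_splits (w : Word α) :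
    (splits w).map (fun s => s.1.length) = Multiset.range (w.length + 1) := by
  induction w with
  | nil => simp [splits]
  | cons a w ih => simpa [splits, Multiset.range_succ (w.length + 1)] using ih

theorem sum_map_splits_fst_eq_nil {M : Type*} [AddCommMonoid M] (F : Word α → M) (w : Word α) :
    ((splits w).map fun s => if s.1 = [] then F s.2 else 0).sum = F w := by
  induction w generalizing F with
  | nil => simp [splits]
  | cons a w ih => simpa [splits] using ih fun y => F (a :: y)

theorem sum_map_splits_snd_eq_nil {M : Type*} [AddCommMonoid M] (F : Word α → M) (w : Word α) :
    ((splits w).map fun s => if s.2 = [] then F s.1 else 0).sum = F w := by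
  cases w <;> simp [splits]

theorem splits_coassoc (w : Word α) :
    ((splits w).bind fun s => (splits s.1).map fun t => (t.1, t.2, s.2)) =
      (splits w).bind fun s => (splits s.2).map fun t => (s.1, t) := by
  induction w with
  | nil => simp [splits]
  | cons a w ih =>
    have h := congrArg (Multiset.map (Prod.map id (Prod.map id (a :: ·)))) ih
    simp only [Multiset.map_bind, Multiset.map_map, Function.comp_def, Prod.map, id] at h
    simp only [splits, Multiset.cons_bind, Multiset.bind_map, Multiset.map_cons, Multiset.map_map,
      Function.comp_def, Prod.map, id, h, Multiset.bind_cons,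
      Multiset.map_singleton]
    simp only [Multiset.cons_add, Multiset.singleton_add]

theorem splits_shuffles (u v : Word α) :
    (shuffles u v).bind splits =
      (splits u).bind fun s => (splits v).bind fun t =>
        (shuffles s.1 t.1).bind fun x => (shuffles s.2 t.2).map fun y => (x, y) := by
  induction u, v using shuffle_induction with
  | nil_left v => simp [splits, Multiset.bind_singleton _ fun s => s]
  | nil_right u => simp [splits, Multiset.bind_singleton _ fun s => s]
  | cons_cons a u b v ihu ihv =>
    have hu := congrArg (Multiset.map (Prod.map id (a :: ·))) ihu
    have hv := congrArg (Multiset.map (Prod.map id (b :: ·))) ihv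
    simp only [splits, Multiset.map_bind, Multiset.map_map, Function.comp_def, Prod.map, id,
      Multiset.cons_bind, Multiset.bind_map, Multiset.map_add, Multiset.add_bind,
      Multiset.bind_add, shuffles_cons_cons, Multiset.bind_cons, shuffles_nil_left,
      shuffles_nil_right, Multiset.map_singleton, Multiset.bind_singleton] at hu hv ⊢
    rw [hu, hv]
    abel

end Combinatorics

section Convolution

variable {α A : Type*}

section Semiring

variable [Semiring A]

/-- The convolution of functions from words to a semiring, dual to the deconcatenation of words. -/
def conv (f g : Word α → A) (w : Word α) : A := ((splits w).map fun s => f s.1 * g s.2).sum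

/-- The neutral element of the convolution: the indicator function of the empty word. -/
def convOne (w : Word α) : A := if w = [] then 1 else 0

theorem conv_cons (f g : Word α → A) (a : α) (w : Word α) :
    conv f g (a :: w) =
      f (a :: w) * g [] + ((splits w).map fun s => f s.1 * g (a :: s.2)).sum := by
  simp [conv, splits]

theorem conv_assoc (f g h : Word α → A) : conv (conv f g) h = conv f (conv g h) := by
  ext w
  have := congrArg (fun m => (m.map fun t => f t.1 * g t.2.1 * h t.2.2).sum) (splits_coassoc w)
  simp only [Multiset.map_bind, Multiset.sum_bind, Multiset.map_map, Function.comp_def] at this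
  simpa only [conv, ← Multiset.sum_map_mul_left, ← Multiset.sum_map_mul_right, ← mul_assoc]

theorem conv_convOne (f : Word α → A) : conv f convOne = f := by
  ext w
  simpa [conv, convOne] using sum_map_splits_snd_eq_nil f w

theorem convOne_conv (f : Word α → A) : conv convOne f = f := by
  ext w
  simpa [conv, convOne] using sum_map_splits_fst_eq_nil f w

end Semiring

variable [Ring A]

theorem conv_left_injective {g : Word α → A} (hg : IsUnit (g [])) :
    Function.Injective (conv · g) := by
  intro f f' h
  ext w
  induction hn : w.length using Nat.strong_induction_on generalizing w with
  | _ n ih =>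
    have hw := congrFun h w
    cases w with
    | nil => simpa [conv, splits, hg.mul_left_inj] using hw
    | cons a w =>
      have hsum : ((splits w).map fun s => f s.1 * g (a :: s.2)) =
          (splits w).map fun s => f' s.1 * g (a :: s.2) := by
        refine Multiset.map_congr rfl fun s hs => ?_
        have hlen := congrArg List.length (append_of_mem_splits hs)
        rw [ih _ (by simp at hlen hn; omega) s.1 rfl]
      simpa [conv_cons, hsum, hg.mul_left_inj] using hw

theorem conv_eq_convOne_symm {f g : Word α → A} (hg : IsUnit (g [])) (h : conv f g = convOne) :
    conv g f = convOne := by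
  refine conv_left_injective hg ?_
  calc conv (conv g f) g = conv g (conv f g) := conv_assoc g f g
    _ = g := by rw [h, conv_convOne]
    _ = conv convOne g := (convOne_conv g).symm

end Convolution

end Word

/-! ### Set compositions as words -/

theorem mem_ground {i : ℕ} {P : SC} : i ∈ ground P ↔ ∃ B ∈ P, i ∈ B := by
  induction P with
  | nil => simp [ground]
  | cons B P ih =>
    have hcons : ground (B :: P) = B ∪ ground P := rfl
    simp [hcons, ih]

theorem IsSetComp.maxG_eq {n : ℕ} {P : SC} (h : IsSetComp n P) : maxG P = n := by
  rw [maxG, h.2.2]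
  refine le_antisymm (Finset.sup_le fun i hi => (mem_Icc.1 hi).2) ?_
  obtain rfl | hn := Nat.eq_zero_or_pos n
  · exact Nat.zero_le _
  · exact Finset.le_sup (f := id) (mem_Icc.2 ⟨hn, le_rfl⟩)

theorem IsSetComp.eq_nil {P : SC} (h : IsSetComp 0 P) : P = [] := by
  rw [List.eq_nil_iff_forall_not_mem]
  intro B hB
  obtain ⟨i, hi⟩ := h.1 B hB
  have hground : i ∈ ground P := mem_ground.2 ⟨B, hB, hi⟩
  simp [h.2.2] at hground

theorem IsSetComp.mem_getElem_iff {n i j : ℕ} {P : SC} (h : IsSetComp n P) (hj : j < P.length) :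
    i ∈ P[j] ↔ i ∈ Icc 1 n ∧ P.findIdx (fun B => decide (i ∈ B)) = j := by
  rw [List.findIdx_eq hj]
  simp only [decide_eq_true_eq, decide_eq_false_iff_not]
  refine ⟨fun hi => ⟨?_, hi, fun k hk hik => ?_⟩, fun hi => hi.2.1⟩
  · rw [← h.2.2, mem_ground]
    exact ⟨_, List.getElem_mem hj, hi⟩
  · exact disjoint_left.1 (List.pairwise_iff_getElem.1 h.2.1 k j _ hj hk) hik hi

theorem Icc_one_succ (n : ℕ) : Icc 1 (n + 1) = insert (n + 1) (Icc 1 n) :=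
  (insert_Icc_right_eq_Icc_add_one (by omega)).symm

namespace Word

section Positions

variable {α : Type*} [DecidableEq α]

/-- The set of positions at which a letter occurs in a word. -/
def positions (c : α) : Word α → Finset ℕ
  | [] => ∅
  | a :: w => if a = c then insert (w.length + 1) (positions c w) else positions c w

theorem positions_subset (c : α) (w : Word α) : positions c w ⊆ Icc 1 w.length := by
  induction w with
  | nil => simp [positions]
  | cons a w ih =>
    rw [List.length_cons, Icc_one_succ, positions]
    split_ifs
    · exact insert_subset_insert _ ih
    · exact ih.trans (subset_insert _ _)

theorem positions_nonempty {c : α} {w : Word α} : (positions c w).Nonempty ↔ c ∈ w := by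
  induction w with
  | nil => simp [positions]
  | cons a w ih =>
    rw [positions]
    split_ifs with h
    · simp [h]
    · simp [ih, Ne.symm h]

theorem positions_eq_empty {c : α} {w : Word α} (h : c ∉ w) : positions c w = ∅ := by
  rwa [← not_nonempty_iff_eq_empty, positions_nonempty]

theorem disjoint_positions {c d : α} (h : c ≠ d) (w : Word α) :
    Disjoint (positions c w) (positions d w) := by
  induction w with
  | nil => simp [positions]
  | cons a w ih =>
    have top_notMem (e : α) : w.length + 1 ∉ positions e w := fun he => by
      simpa using positions_subset e w he
    rw [positions, positions]
    split_ifs with hac had had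
    · exact absurd (hac.symm.trans had) h
    · exact disjoint_insert_left.2 ⟨top_notMem d, ih⟩
    · exact disjoint_insert_right.2 ⟨top_notMem c, ih⟩
    · exact ih

theorem exists_mem_positions {i : ℕ} {w : Word α} (h : i ∈ Icc 1 w.length) :
    ∃ c ∈ w, i ∈ positions c w := by
  induction w with
  | nil => simp at h
  | cons a w ih =>
    rw [List.length_cons, Icc_one_succ, mem_insert] at h
    obtain rfl | h := h
    · exact ⟨a, by simp, by simp [positions]⟩
    · obtain ⟨c, hc, hi⟩ := ih h
      refine ⟨c, by simp [hc], ?_⟩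
      rw [positions]
      split_ifs <;> simp [hi]

theorem positions_append (c : α) (y x : Word α) :
    positions c (y ++ x) = positions c x ∪ (positions c y).image (· + x.length) := by
  induction y with
  | nil => simp [positions]
  | cons a y ih =>
    rw [List.cons_append, positions, positions, ih]
    split_ifs
    · rw [image_insert, union_insert, List.length_append, Nat.add_right_comm]
    · rfl

end Positions

section OfFn

variable {α : Type*}

/-- The word of length `n` with letter `f i` at position `i`. -/
def ofFn (f : ℕ → α) : ℕ → Word α
  | 0 => []
  | n + 1 => f (n + 1) :: ofFn f n

@[simp]
theorem length_ofFn (f : ℕ → α) (n : ℕ) : (ofFn f n).length = n := by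
  induction n with
  | zero => rfl
  | succ n ih => simp [ofFn, ih]

theorem positions_ofFn [DecidableEq α] (f : ℕ → α) (c : α) (n : ℕ) :
    positions c (ofFn f n) = {i ∈ Icc 1 n | f i = c} := by
  induction n with
  | zero => rfl
  | succ n ih => rw [ofFn, positions, ih, Icc_one_succ, filter_insert, length_ofFn]

theorem mem_ofFn {f : ℕ → α} {c : α} {n : ℕ} : c ∈ ofFn f n ↔ ∃ i ∈ Icc 1 n, f i = c := by
  classical
  rw [← positions_nonempty, positions_ofFn, filter_nonempty_iff]

end OfFn

section SetComp

variable {α : Type*} [LinearOrder α]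

/-- The set composition encoded by a word: the sets of positions of its letters, taken in
increasing order of the letters. -/
def toSetComp (w : Word α) : SC := (w.toFinset.sort (· ≤ ·)).map (positions · w)

theorem toSetComp_eq_map {L : List α} {w : Word α} (hL : L.Pairwise (· < ·))
    (hmem : ∀ c, c ∈ L ↔ c ∈ w) : toSetComp w = L.map (positions · w) := by
  have hset : w.toFinset = L.toFinset := by
    ext c
    simp [hmem]
  have hsort := (List.toFinset_sort (· ≤ ·) (hL.imp ne_of_lt)).2 (hL.imp le_of_lt)
  rw [toSetComp, hset, hsort]

theorem mem_toSetComp {B : Finset ℕ} {w : Word α} :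
    B ∈ toSetComp w ↔ ∃ c ∈ w, positions c w = B := by
  simp [toSetComp]

@[simp]
theorem toSetComp_nil : toSetComp ([] : Word α) = [] := by
  simp [toSetComp]

theorem isSetComp_toSetComp (w : Word α) : IsSetComp w.length (toSetComp w) := by
  refine ⟨fun B hB => ?_, ?_, ?_⟩
  · obtain ⟨c, hc, rfl⟩ := mem_toSetComp.1 hB
    exact positions_nonempty.2 hc
  · exact List.pairwise_map.2 ((sort_nodup _ _).imp fun h => disjoint_positions h w)
  · ext i
    rw [mem_ground]
    constructor
    · rintro ⟨B, hB, hi⟩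
      obtain ⟨c, -, rfl⟩ := mem_toSetComp.1 hB
      exact positions_subset c w hi
    · intro hi
      obtain ⟨c, hc, h⟩ := exists_mem_positions hi
      exact ⟨_, mem_toSetComp.2 ⟨c, hc, rfl⟩, h⟩

@[simp]
theorem maxG_toSetComp (w : Word α) : maxG (toSetComp w) = w.length :=
  (isSetComp_toSetComp w).maxG_eq

theorem toSetComp_eq_nil {w : Word α} : toSetComp w = [] ↔ w = [] := by
  rw [← List.length_eq_zero_iff, toSetComp, List.length_map, length_sort]
  simp

end SetComp

end Word

open Word

theorem IsSetComp.exists_word {n : ℕ} {P : SC} (h : IsSetComp n P) (N : ℕ) :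
    ∃ w : Word ℕ, toSetComp w = P ∧ ∀ c ∈ w, N ≤ c := by
  set f : ℕ → ℕ := fun i => N + P.findIdx fun B => decide (i ∈ B) with hf
  have getElem_eq (j : ℕ) (hj : j < P.length) : positions (N + j) (ofFn f n) = P[j] := by
    ext i
    rw [positions_ofFn, mem_filter, h.mem_getElem_iff hj, hf, Nat.add_left_cancel_iff]
  have mem_iff (c : ℕ) : c ∈ List.range' N P.length ↔ c ∈ ofFn f n := by
    rw [List.mem_range'_1]
    constructor
    · rintro ⟨hN, hlt⟩
      obtain ⟨j, rfl⟩ := Nat.exists_eq_add_of_le hN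
      rw [← positions_nonempty, getElem_eq j (by omega)]
      exact h.1 _ (List.getElem_mem _)
    · rw [mem_ofFn]
      rintro ⟨i, hi, rfl⟩
      rw [← h.2.2, mem_ground] at hi
      obtain ⟨B, hB, hi⟩ := hi
      have hlt := List.findIdx_lt_length_of_exists (p := fun B => decide (i ∈ B)) ⟨B, hB, by simpa⟩
      simp only [hf]
      omega
  refine ⟨ofFn f n, ?_, fun c hc => (List.mem_range'_1.1 ((mem_iff c).2 hc)).1⟩
  rw [toSetComp_eq_map List.pairwise_lt_range' mem_iff]
  refine List.ext_getElem (by simp) fun j _ hj => ?_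
  simpa using getElem_eq j hj

theorem Word.exists_forall_lt (w : Word ℕ) : ∃ N, ∀ c ∈ w, c < N := by
  obtain ⟨N, hN⟩ := w.toFinset.exists_nat_subset_range
  exact ⟨N, fun c hc => mem_range.1 (hN (List.mem_toFinset.2 hc))⟩

theorem IsSetComp.exists_words {p q : ℕ} {P Q : SC} (hP : IsSetComp p P) (hQ : IsSetComp q Q) :
    ∃ u v : Word ℕ, toSetComp u = P ∧ toSetComp v = Q ∧ ∀ a ∈ u, ∀ b ∈ v, a < b := by
  obtain ⟨u, rfl, -⟩ := hP.exists_word 0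
  obtain ⟨N, hN⟩ := exists_forall_lt u
  obtain ⟨v, rfl, hv⟩ := hQ.exists_word N
  exact ⟨u, v, rfl, rfl, fun a ha b hb => (hN a ha).trans_le (hv b hb)⟩

/-! ### Restriction and deconcatenation -/

theorem rankIn_Icc {k m i : ℕ} (hi : i ≤ m) : rankIn (Icc (k + 1) (k + m)) (i + k) = i := by
  have hfilter : {j ∈ Icc (k + 1) (k + m) | j ≤ i + k} = Icc (k + 1) (i + k) := by
    ext j
    simp only [mem_filter, mem_Icc]
    omega
  rw [rankIn, hfilter, Nat.card_Icc]
  omega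

namespace Word

section Restriction

variable {α : Type*} [LinearOrder α]

theorem positions_append_inter_Icc (c : α) (z y x : Word α) :
    positions c (z ++ y ++ x) ∩ Icc (x.length + 1) (x.length + y.length) =
      (positions c y).image (· + x.length) := by
  ext i
  have hx := positions_subset c x
  have hy := positions_subset c y
  have hz := positions_subset c z
  simp only [positions_append, mem_inter, mem_union, mem_image]
  constructor
  · rintro ⟨hi | ⟨_, hi | ⟨j, hj, rfl⟩, rfl⟩, hmem⟩
    · have := hx hi
      simp only [mem_Icc] at this hmem
      omega
    · exact ⟨_, hi, rfl⟩
    · have := hz hj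
      simp only [mem_Icc] at this hmem
      omega
  · rintro ⟨j, hj, rfl⟩
    refine ⟨Or.inr ⟨j, Or.inl hj, rfl⟩, ?_⟩
    have := hy hj
    simp only [mem_Icc] at this ⊢
    omega

theorem image_rankIn_positions_append (c : α) (z y x : Word α) :
    (positions c (z ++ y ++ x) ∩ Icc (x.length + 1) (x.length + y.length)).image
      (rankIn (Icc (x.length + 1) (x.length + y.length))) = positions c y := by
  rw [positions_append_inter_Icc, image_image]
  calc (positions c y).image _ = (positions c y).image id :=
        image_congr fun i hi => rankIn_Icc (mem_Icc.1 (positions_subset c y hi)).2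
    _ = positions c y := image_id

theorem restrictSC_toSetComp (z y x : Word α) :
    restrictSC (Icc (x.length + 1) (x.length + y.length)) (toSetComp (z ++ y ++ x)) =
      toSetComp y := by
  have hmem (c : α) :
      c ∈ ((z ++ y ++ x).toFinset.sort (· ≤ ·)).filter (fun c => decide (c ∈ y)) ↔ c ∈ y := by
    simp +contextual
  rw [toSetComp_eq_map ((sortedLT_sort _).pairwise.filter _) hmem, restrictSC, toSetComp,
    List.map_map, List.filter_map]
  simp only [Function.comp_def, image_rankIn_positions_append, positions_nonempty]

theorem restrictSC_Icc_one (y x : Word α) :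
    restrictSC (Icc 1 x.length) (toSetComp (y ++ x)) = toSetComp x := by
  simpa using restrictSC_toSetComp y x []

theorem restrictSC_Icc_succ (y x : Word α) :
    restrictSC (Icc (x.length + 1) (y ++ x).length) (toSetComp (y ++ x)) = toSetComp y := by
  simpa [Nat.add_comm] using restrictSC_toSetComp [] y x

theorem sum_range_restrictSC {M : Type*} [AddCommMonoid M] (F : ℕ → SC → SC → M) (w : Word α) :
    ∑ p ∈ range (w.length + 1), F p (restrictSC (Icc 1 p) (toSetComp w))
        (restrictSC (Icc (p + 1) w.length) (toSetComp w)) =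
      ((splits w).map fun s => F s.1.length (toSetComp s.1) (toSetComp s.2)).sum := by
  rw [Finset.sum, range_val, ← map_length_splits, Multiset.map_map]
  refine congrArg Multiset.sum (Multiset.map_congr rfl fun s hs => ?_)
  obtain rfl := append_of_mem_splits hs
  simp only [Function.comp_apply, restrictSC_Icc_one, restrictSC_Icc_succ]

end Restriction

end Word

/-! ### Relabelling and shuffles -/

theorem sort_insert_of_forall_lt {m : ℕ} {T : Finset ℕ} (h : ∀ t ∈ T, t < m) :
    (insert m T).sort (· ≤ ·) = T.sort (· ≤ ·) ++ [m] := by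
  have hset : insert m T = (T.sort (· ≤ ·) ++ [m]).toFinset := by
    ext i
    simp
  have hsorted : (T.sort (· ≤ ·) ++ [m]).Pairwise (· < ·) := by
    simpa [List.pairwise_append, (sortedLT_sort T).pairwise] using h
  rw [hset]
  exact (List.toFinset_sort (· ≤ ·) (hsorted.imp ne_of_lt)).2 (hsorted.imp le_of_lt)

theorem rankIn_Icc_one {p x : ℕ} (hx : x ≤ p) : rankIn (Icc 1 p) x = x := by
  simpa using rankIn_Icc (k := 0) hx

theorem relabelFun_insert_of_le {m x : ℕ} {T : Finset ℕ} (h : ∀ t ∈ T, t < m)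
    (hx : x ∈ Icc 1 #T) :
    relabelFun (Icc 1 (#T + 1)) (insert m T) x = relabelFun (Icc 1 #T) T x := by
  obtain ⟨hx_pos, hx_le⟩ := mem_Icc.1 hx
  rw [relabelFun, relabelFun, rankIn_Icc_one hx_le, rankIn_Icc_one (by omega),
    sort_insert_of_forall_lt h, List.getD_append]
  rw [length_sort]
  omega

theorem relabelFun_insert_top {m : ℕ} {T : Finset ℕ} (h : ∀ t ∈ T, t < m) :
    relabelFun (Icc 1 (#T + 1)) (insert m T) (#T + 1) = m := by
  rw [relabelFun, rankIn_Icc_one le_rfl, sort_insert_of_forall_lt h, List.getD_append_right] <;>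
    simp

theorem lt_succ_of_subset_Icc {n : ℕ} {A : Finset ℕ} (hA : A ⊆ Icc 1 n) {i : ℕ} (hi : i ∈ A) :
    i < n + 1 :=
  Nat.lt_succ_of_le (mem_Icc.1 (hA hi)).2

theorem succ_notMem_of_subset_Icc {n : ℕ} {A : Finset ℕ} (hA : A ⊆ Icc 1 n) : n + 1 ∉ A :=
  fun h => (lt_succ_of_subset_Icc hA h).false

theorem sum_powersetCard_succ_insert {ι M : Type*} [DecidableEq ι] [AddCommMonoid M] {x : ι}
    {s : Finset ι} (hx : x ∉ s) (k : ℕ) (F : Finset ι → M) :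
    ∑ A ∈ powersetCard (k + 1) (insert x s), F A =
      ∑ A ∈ powersetCard (k + 1) s, F A + ∑ A ∈ powersetCard k s, F (insert x A) := by
  have notMem {j : ℕ} {A : Finset ι} (hA : A ∈ powersetCard j s) : x ∉ A := fun hxA =>
    hx ((mem_powersetCard.1 hA).1 hxA)
  rw [powersetCard_succ_insert hx, sum_union, sum_image]
  · intro A hA B hB hAB
    rw [← erase_insert (notMem hA), hAB, erase_insert (notMem hB)]
  · rw [disjoint_left]
    rintro _ hA hB
    obtain ⟨B, -, rfl⟩ := mem_image.1 hB
    exact notMem hA (mem_insert_self x B)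

namespace Word

section Placement

variable {α : Type*} [DecidableEq α]

/-- The family of position sets obtained from `P` by putting the letter `a` at position `m`. -/
def insertPos (a : α) (m : ℕ) (P : α → Finset ℕ) (c : α) : Finset ℕ :=
  if a = c then insert m (P c) else P c

theorem positions_cons (a : α) (w : Word α) :
    (positions · (a :: w)) = insertPos a (w.length + 1) (positions · w) := rfl

theorem insertPos_sup (a : α) (m : ℕ) (P Q : α → Finset ℕ) :
    insertPos a m P ⊔ Q = insertPos a m (P ⊔ Q) := by
  ext c : 1
  simp only [insertPos, Pi.sup_apply, sup_eq_union]
  split_ifs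
  · rw [insert_union]
  · rfl

theorem sup_insertPos (a : α) (m : ℕ) (P Q : α → Finset ℕ) :
    P ⊔ insertPos a m Q = insertPos a m (P ⊔ Q) := by
  rw [sup_comm, insertPos_sup, sup_comm]

/-- The positions of the letters of `u` after these have been moved to the positions in `A`, in
the same order. -/
def placement (A : Finset ℕ) (u : Word α) (c : α) : Finset ℕ :=
  (positions c u).image (relabelFun (Icc 1 u.length) A)

theorem placement_nil (A : Finset ℕ) : placement A ([] : Word α) = ⊥ := rfl

theorem placement_insert_cons {m : ℕ} {A : Finset ℕ} {u : Word α} (hA : ∀ i ∈ A, i < m)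
    (hcard : #A = u.length) (a : α) :
    placement (insert m A) (a :: u) = insertPos a m (placement A u) := by
  ext c : 1
  have himage : (positions c u).image (relabelFun (Icc 1 (u.length + 1)) (insert m A)) =
      (positions c u).image (relabelFun (Icc 1 u.length) A) := by
    rw [← hcard]
    refine image_congr fun i hi => relabelFun_insert_of_le hA ?_
    simpa [hcard] using positions_subset c u hi
  rw [placement, insertPos, placement, positions, List.length_cons]
  split_ifs
  · rw [image_insert, himage, ← hcard, relabelFun_insert_top hA]
  · exact himage

theorem placement_Icc_one (u : Word α) : placement (Icc 1 u.length) u = (positions · u) := by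
  induction u with
  | nil => rfl
  | cons a u ih =>
    rw [List.length_cons, Icc_one_succ,
      placement_insert_cons (fun _ => lt_succ_of_subset_Icc subset_rfl) (by simp), ih,
      positions_cons]

/-- The positions of the letters of `u` and `v` in the word of length `n` that has the letters of
`u` at the positions in `A` and those of `v` at the other positions. -/
def merge (n : ℕ) (A : Finset ℕ) (u v : Word α) : α → Finset ℕ :=
  placement A u ⊔ placement (Icc 1 n \ A) v

theorem merge_insert_cons {n : ℕ} {A : Finset ℕ} {u : Word α} (hA : A ⊆ Icc 1 n)
    (hcard : #A = u.length) (a : α) (v : Word α) :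
    merge (n + 1) (insert (n + 1) A) (a :: u) v = insertPos a (n + 1) (merge n A u v) := by
  rw [merge, Icc_one_succ, insert_sdiff_insert,
    sdiff_insert_of_notMem (succ_notMem_of_subset_Icc subset_rfl),
    placement_insert_cons (fun _ => lt_succ_of_subset_Icc hA) hcard, insertPos_sup, merge]

theorem merge_cons {n : ℕ} {A : Finset ℕ} {u v : Word α} (hA : A ⊆ Icc 1 n)
    (hcard : #A = u.length) (hn : u.length + v.length = n) (b : α) :
    merge (n + 1) A u (b :: v) = insertPos b (n + 1) (merge n A u v) := by
  have hcompl : #(Icc 1 n \ A) = v.length := by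
    rw [card_sdiff_of_subset hA, hcard, Nat.card_Icc]
    omega
  rw [merge, Icc_one_succ, insert_sdiff_of_notMem _ (succ_notMem_of_subset_Icc hA),
    placement_insert_cons (fun _ => lt_succ_of_subset_Icc sdiff_subset) hcompl, sup_insertPos,
    merge]

theorem map_positions_cons_shuffles {M : Type*} (F : (α → Finset ℕ) → M) (a : α)
    (u v : Word α) :
    ((shuffles u v).map fun s => F (positions · (a :: s))) =
      (shuffles u v).map fun s =>
        F (insertPos a (u.length + v.length + 1) (positions · s)) :=
  Multiset.map_congr rfl fun s hs => by rw [positions_cons, length_of_mem_shuffles hs]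

theorem sum_merge {M : Type*} [AddCommMonoid M] (F : (α → Finset ℕ) → M) (u v : Word α) :
    ∑ A ∈ powersetCard u.length (Icc 1 (u.length + v.length)),
        F (merge (u.length + v.length) A u v) =
      ((shuffles u v).map fun s => F (positions · s)).sum := by
  induction u, v using shuffle_induction generalizing F with
  | nil_left v => simp [merge, placement_nil, placement_Icc_one]
  | nil_right u =>
    have hself := powersetCard_self (Icc 1 u.length)
    rw [Nat.card_Icc, Nat.add_sub_cancel] at hself
    simp [merge, placement_nil, placement_Icc_one, hself]
  | cons_cons a u b v ihu ihv =>
    set n := u.length + (b :: v).length with hn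
    have hn' : (a :: u).length + v.length = n := by
      simp only [hn, List.length_cons]
      omega
    rw [hn'] at ihv
    rw [shuffles_cons_cons, Multiset.map_add, Multiset.sum_add, Multiset.map_map, Multiset.map_map,
      List.length_cons (as := u), Nat.add_right_comm, ← hn, Icc_one_succ,
      sum_powersetCard_succ_insert (succ_notMem_of_subset_Icc subset_rfl), add_comm]
    simp only [Function.comp_def, map_positions_cons_shuffles, ← hn, hn']
    rw [← ihu fun P => F (insertPos a (n + 1) P), ← ihv fun P => F (insertPos b (n + 1) P)]
    congr 1 <;> refine sum_congr rfl fun A hA => ?_ <;>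
      obtain ⟨hA, hcard⟩ := mem_powersetCard.1 hA
    · rw [merge_insert_cons hA hcard]
    · rw [merge_cons hA hcard hn']

end Placement

end Word

namespace Word

section ToFM

variable {α : Type*} [LinearOrder α]

/-- The basis element of `T_•` encoded by a word. -/
noncomputable def toFM (w : Word α) : FM R := Finsupp.single (toSetComp w) 1

/-- The basis element of `T_• ⊗ T_•` encoded by a pair of words. -/
noncomputable def toFM2 (s : Word α × Word α) : FM2 R :=
  Finsupp.single (toSetComp s.1, toSetComp s.2) 1

theorem toFM_nil : toFM R ([] : Word α) = Finsupp.single [] 1 := by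
  rw [toFM, toSetComp_nil]

theorem relabelSC_append_relabelSC {u v : Word α} (h : ∀ a ∈ u, ∀ b ∈ v, a < b) {n : ℕ}
    (A : Finset ℕ) :
    relabelSC (Icc 1 u.length) A (toSetComp u) ++
        relabelSC (Icc 1 v.length) (Icc 1 n \ A) (toSetComp v) =
      (u.toFinset.sort (· ≤ ·) ++ v.toFinset.sort (· ≤ ·)).map (merge n A u v) := by
  rw [List.map_append, relabelSC, relabelSC, toSetComp, toSetComp, List.map_map, List.map_map]
  congr 1 <;> refine List.map_congr_left fun c hc => ?_ <;>
    rw [mem_sort, List.mem_toFinset] at hc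
  · have hcv : c ∉ v := fun hcv => (h c hc c hcv).false
    simp [merge, placement, positions_eq_empty hcv]
  · have hcu : c ∉ u := fun hcu => (h c hcu c hc).false
    simp [merge, placement, positions_eq_empty hcu]

theorem toSetComp_of_mem_shuffles {u v s : Word α} (h : ∀ a ∈ u, ∀ b ∈ v, a < b)
    (hs : s ∈ shuffles u v) :
    toSetComp s = (u.toFinset.sort (· ≤ ·) ++ v.toFinset.sort (· ≤ ·)).map (positions · s) := by
  refine toSetComp_eq_map (List.pairwise_append.2 ⟨(sortedLT_sort _).pairwise,
    (sortedLT_sort _).pairwise, fun a ha b hb => ?_⟩) fun c => ?_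
  · exact h a (by simpa using ha) b (by simpa using hb)
  · simp [mem_iff_of_mem_shuffles hs]

theorem hatB_toSetComp {u v : Word α} (h : ∀ a ∈ u, ∀ b ∈ v, a < b) :
    hatB R (toSetComp u) (toSetComp v) = ((shuffles u v).map (toFM R)).sum := by
  set L := u.toFinset.sort (· ≤ ·) ++ v.toFinset.sort (· ≤ ·)
  set n := u.length + v.length
  calc hatB R (toSetComp u) (toSetComp v)
    _ = ∑ A ∈ powersetCard u.length (Icc 1 n), Finsupp.single (L.map (merge n A u v)) 1 := by
        rw [hatB, maxG_toSetComp, maxG_toSetComp, ← powersetCard_eq_filter]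
        exact sum_congr rfl fun A _ => by rw [relabelSC_append_relabelSC h]
    _ = ((shuffles u v).map fun s => Finsupp.single (L.map (positions · s)) 1).sum :=
        sum_merge (fun P => Finsupp.single (L.map P) 1) u v
    _ = ((shuffles u v).map (toFM R)).sum :=
        congrArg Multiset.sum (Multiset.map_congr rfl fun s hs => by
          rw [toFM, toSetComp_of_mem_shuffles h hs])

theorem hatL_single (P Q : SC) :
    hatL R (Finsupp.single P 1) (Finsupp.single Q 1) = hatB R P Q := by
  simp [hatL]

theorem hatL_toFM {u v : Word α} (h : ∀ a ∈ u, ∀ b ∈ v, a < b) :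
    hatL R (toFM R u) (toFM R v) = ((shuffles u v).map (toFM R)).sum := by
  rw [toFM, toFM, hatL_single, hatB_toSetComp R h]

theorem dBarL_toFM (w : Word α) :
    dBarL R (toFM R w) = ((splits w).map (toFM2 R)).sum := by
  simp only [dBarL, toFM, Finsupp.lift_apply, zero_smul, Finsupp.sum_single_index, one_smul,
    maxG_toSetComp]
  exact sum_range_restrictSC (fun _ P Q => Finsupp.single (P, Q) (1 : R)) w

end ToFM

end Word

/-! ### The algebra -/

theorem hatL_mem_span {p q : ℕ} {P Q : SC} (hP : IsSetComp p P) (hQ : IsSetComp q Q) :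
    hatL R (Finsupp.single P 1) (Finsupp.single Q 1) ∈ Submodule.span R
      {f : FM R | ∃ U : SC, IsSetComp (p + q) U ∧ f = Finsupp.single U 1} := by
  obtain ⟨u, v, rfl, rfl, huv⟩ := hP.exists_words hQ
  rw [← hP.maxG_eq, ← hQ.maxG_eq, maxG_toSetComp, maxG_toSetComp, hatL_single,
    hatB_toSetComp R huv]
  refine multiset_sum_mem _ fun x hx => ?_
  obtain ⟨s, hs, rfl⟩ := Multiset.mem_map.1 hx
  exact Submodule.subset_span
    ⟨toSetComp s, length_of_mem_shuffles hs ▸ isSetComp_toSetComp s, rfl⟩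

theorem hatL_mem_Tspan {x y : FM R} (hx : x ∈ Tspan R) (hy : y ∈ Tspan R) :
    hatL R x y ∈ Tspan R := by
  suffices Submodule.map₂ (hatL R) (Tspan R) (Tspan R) ≤ Tspan R from
    this (Submodule.apply_mem_map₂ _ hx hy)
  rw [Tspan, Submodule.map₂_span_span, Submodule.span_le]
  rintro _ ⟨_, ⟨p, P, hP, rfl⟩, _, ⟨q, Q, hQ, rfl⟩, rfl⟩
  refine Submodule.span_mono ?_ (hatL_mem_span R hP hQ)
  rintro _ ⟨U, hU, rfl⟩
  exact ⟨_, U, hU, rfl⟩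

variable {R} in
theorem eqOn_Tspan {M : Type*} [AddCommMonoid M] [Module R M] {f g : FM R →ₗ[R] M} (N : ℕ)
    (h : ∀ w : Word ℕ, (∀ c ∈ w, N ≤ c) → f (toFM R w) = g (toFM R w)) :
    Set.EqOn f g (Tspan R) := by
  refine LinearMap.eqOn_span ?_
  rintro _ ⟨n, P, hP, rfl⟩
  obtain ⟨w, rfl, hw⟩ := hP.exists_word N
  exact h w hw

theorem hatL_assoc_toFM {α : Type*} [LinearOrder α] {u v w : Word α}
    (huv : ∀ a ∈ u, ∀ b ∈ v, a < b) (huw : ∀ a ∈ u, ∀ c ∈ w, a < c)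
    (hvw : ∀ b ∈ v, ∀ c ∈ w, b < c) :
    hatL R (hatL R (toFM R u) (toFM R v)) (toFM R w) =
      hatL R (toFM R u) (hatL R (toFM R v) (toFM R w)) := by
  have hleft : (shuffles u v).map (fun s => hatL R (toFM R s) (toFM R w)) =
      (shuffles u v).map fun s => ((shuffles s w).map (toFM R)).sum :=
    Multiset.map_congr rfl fun s hs => hatL_toFM R fun a ha c hc =>
      ((mem_iff_of_mem_shuffles hs).1 ha).elim (huw a · c hc) (hvw a · c hc)
  have hright : (shuffles v w).map (fun s => hatL R (toFM R u) (toFM R s)) =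
      (shuffles v w).map fun s => ((shuffles u s).map (toFM R)).sum :=
    Multiset.map_congr rfl fun s hs => hatL_toFM R fun a ha c hc =>
      ((mem_iff_of_mem_shuffles hs).1 hc).elim (huv a ha c) (huw a ha c)
  rw [hatL_toFM R huv, hatL_toFM R hvw, ← LinearMap.flip_apply, map_multiset_sum,
    map_multiset_sum, Multiset.map_map, Multiset.map_map]
  simp only [Function.comp_def, LinearMap.flip_apply, hleft, hright]
  rw [← Multiset.sum_bind, ← Multiset.sum_bind, ← Multiset.map_bind, ← Multiset.map_bind,
    shuffles_assoc]

theorem hatL_assoc {x y z : FM R} (hx : x ∈ Tspan R) (hy : y ∈ Tspan R) (hz : z ∈ Tspan R) :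
    hatL R (hatL R x y) z = hatL R x (hatL R y z) := by
  refine eqOn_Tspan (f := ((hatL R).flip z).comp ((hatL R).flip y))
    (g := (hatL R).flip (hatL R y z)) 0 (fun u _ => ?_) hx
  obtain ⟨N, hN⟩ := exists_forall_lt u
  refine eqOn_Tspan (f := ((hatL R).flip z).comp (hatL R (toFM R u)))
    (g := (hatL R (toFM R u)).comp ((hatL R).flip z)) N (fun v hv => ?_) hy
  obtain ⟨K, hK⟩ := exists_forall_lt v
  refine eqOn_Tspan (f := hatL R (hatL R (toFM R u) (toFM R v)))
    (g := (hatL R (toFM R u)).comp (hatL R (toFM R v))) (max N K) (fun w hw => ?_) hz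
  exact hatL_assoc_toFM R (fun a ha b hb => (hN a ha).trans_le (hv b hb))
    (fun a ha c hc => (hN a ha).trans_le (le_of_max_le_left (hw c hc)))
    (fun b hb c hc => (hK b hb).trans_le (le_of_max_le_right (hw c hc)))

theorem one_hatL {x : FM R} (hx : x ∈ Tspan R) : hatL R (Finsupp.single [] 1) x = x := by
  refine eqOn_Tspan (g := LinearMap.id) 0 (fun w _ => ?_) hx
  rw [← toFM_nil R (α := ℕ), hatL_toFM R (by simp)]
  simp

theorem hatL_one {x : FM R} (hx : x ∈ Tspan R) : hatL R x (Finsupp.single [] 1) = x := by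
  refine eqOn_Tspan (f := (hatL R).flip (Finsupp.single [] 1)) (g := LinearMap.id) 0
    (fun w _ => ?_) hx
  rw [← toFM_nil R (α := ℕ), LinearMap.flip_apply, hatL_toFM R (by simp)]
  simp

/-! ### The coalgebra -/

namespace Word

section Coalgebra

variable {α : Type*} [LinearOrder α]

theorem applyFst_dBarL (w : Word α) :
    applyFst R (dBarL R) (dBarL R (toFM R w)) =
      (((splits w).bind fun s => (splits s.1).map fun t => (t.1, t.2, s.2)).map fun t =>
        Finsupp.single (toSetComp t.1, toSetComp t.2.1, toSetComp t.2.2) 1).sum := by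
  have happly (s : Word α × Word α) : applyFst R (dBarL R) (toFM2 R s) =
      ((splits s.1).map fun t =>
        Finsupp.single (toSetComp t.1, toSetComp t.2, toSetComp s.2) 1).sum := by
    trans Finsupp.mapDomain.addMonoidHom (fun U : SC × SC => (U.1, U.2, toSetComp s.2))
      (dBarL R (toFM R s.1))
    · simp [applyFst, toFM2, toFM]
    · simp [dBarL_toFM, map_multiset_sum, toFM2, Function.comp_def]
  rw [dBarL_toFM, map_multiset_sum, Multiset.map_map]
  simp only [Function.comp_def, happly, Multiset.map_bind, Multiset.sum_bind, Multiset.map_map]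

theorem applySnd_dBarL (w : Word α) :
    applySnd R (dBarL R) (dBarL R (toFM R w)) =
      (((splits w).bind fun s => (splits s.2).map fun t => (s.1, t)).map fun t =>
        Finsupp.single (toSetComp t.1, toSetComp t.2.1, toSetComp t.2.2) 1).sum := by
  have happly (s : Word α × Word α) : applySnd R (dBarL R) (toFM2 R s) =
      ((splits s.2).map fun t =>
        Finsupp.single (toSetComp s.1, toSetComp t.1, toSetComp t.2) 1).sum := by
    trans Finsupp.mapDomain.addMonoidHom (fun U : SC × SC => (toSetComp s.1, U.1, U.2))
      (dBarL R (toFM R s.2))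
    · simp [applySnd, toFM2, toFM]
    · simp [dBarL_toFM, map_multiset_sum, toFM2, Function.comp_def]
  rw [dBarL_toFM, map_multiset_sum, Multiset.map_map]
  simp only [Function.comp_def, happly, Multiset.map_bind, Multiset.sum_bind, Multiset.map_map]

theorem epsFst_dBarL (w : Word α) : epsFst R (dBarL R (toFM R w)) = toFM R w := by
  rw [dBarL_toFM, map_multiset_sum, Multiset.map_map, ← sum_map_splits_fst_eq_nil (toFM R) w]
  simp [epsFst, toFM2, toFM, toSetComp_eq_nil, Function.comp_def]

theorem epsSnd_dBarL (w : Word α) : epsSnd R (dBarL R (toFM R w)) = toFM R w := by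
  rw [dBarL_toFM, map_multiset_sum, Multiset.map_map, ← sum_map_splits_snd_eq_nil (toFM R) w]
  simp [epsSnd, toFM2, toFM, toSetComp_eq_nil, Function.comp_def]

theorem counitL_toFM (w : Word α) : counitL R (toFM R w) = if w = [] then 1 else 0 := by
  simp only [counitL, toFM, Finsupp.lift_apply, zero_smul, Finsupp.sum_single_index, one_smul,
    toSetComp_eq_nil]

end Coalgebra

end Word

theorem dBarL_coassoc {n : ℕ} {P : SC} (hP : IsSetComp n P) :
    applyFst R (dBarL R) (dBarL R (Finsupp.single P 1)) =
      applySnd R (dBarL R) (dBarL R (Finsupp.single P 1)) := by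
  obtain ⟨w, rfl, -⟩ := hP.exists_word 0
  rw [← toFM, applyFst_dBarL, applySnd_dBarL, splits_coassoc]

theorem dBarL_counit {n : ℕ} {P : SC} (hP : IsSetComp n P) :
    epsFst R (dBarL R (Finsupp.single P 1)) = Finsupp.single P 1 ∧
      epsSnd R (dBarL R (Finsupp.single P 1)) = Finsupp.single P 1 := by
  obtain ⟨w, rfl, -⟩ := hP.exists_word 0
  exact ⟨epsFst_dBarL R w, epsSnd_dBarL R w⟩

theorem counitL_one : counitL R (Finsupp.single [] 1) = 1 := by
  rw [← toFM_nil R (α := ℕ), counitL_toFM, if_pos rfl]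

/-! ### Compatibility of the algebra and the coalgebra -/

open scoped TensorProduct in
theorem tensor2_eq_tmul (x y : FM R) :
    tensor2 R x y = finsuppTensorFinsupp' R SC SC (x ⊗ₜ y) := by
  conv_rhs => rw [← x.sum_single, ← y.sum_single]
  simp only [tensor2, Finsupp.sum, TensorProduct.sum_tmul, map_sum]
  simp only [TensorProduct.tmul_sum, map_sum, finsuppTensorFinsupp'_single_tmul_single]

theorem mul2hat_single (P Q U V : SC) :
    mul2hat R (Finsupp.single (P, Q) 1) (Finsupp.single (U, V) 1) =
      tensor2 R (hatB R P U) (hatB R Q V) := by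
  simp [mul2hat]

namespace Word

section Compatibility

variable {α : Type*} [LinearOrder α]

theorem tensor2_sum_toFM (m m' : Multiset (Word α)) :
    tensor2 R (m.map (toFM R)).sum (m'.map (toFM R)).sum =
      ((m.bind fun x => m'.map fun y => (x, y)).map (toFM2 R)).sum := by
  let B := (TensorProduct.mk R (FM R) (FM R)).compr₂ (finsuppTensorFinsupp' R SC SC).toLinearMap
  have hB (x y : FM R) : tensor2 R x y = B x y := tensor2_eq_tmul R x y
  have hleft (x : Word α) : B (toFM R x) (m'.map (toFM R)).sum =
      (m'.map fun y => toFM2 R (x, y)).sum := by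
    rw [map_multiset_sum, Multiset.map_map]
    simp [B, toFM, toFM2, Function.comp_def]
  rw [hB, ← LinearMap.flip_apply, map_multiset_sum, Multiset.map_map, Multiset.map_bind,
    Multiset.sum_bind]
  simp only [Function.comp_def, LinearMap.flip_apply, hleft, Multiset.map_map]

theorem mul2hat_toFM2 {s t : Word α × Word α} (h1 : ∀ a ∈ s.1, ∀ b ∈ t.1, a < b)
    (h2 : ∀ a ∈ s.2, ∀ b ∈ t.2, a < b) :
    mul2hat R (toFM2 R s) (toFM2 R t) =
      (((shuffles s.1 t.1).bind fun x => (shuffles s.2 t.2).map fun y => (x, y)).map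
        (toFM2 R)).sum := by
  rw [toFM2, toFM2, mul2hat_single, hatB_toSetComp R h1, hatB_toSetComp R h2, tensor2_sum_toFM]

theorem dBarL_hatL_toFM {u v : Word α} (h : ∀ a ∈ u, ∀ b ∈ v, a < b) :
    dBarL R (hatL R (toFM R u) (toFM R v)) =
      mul2hat R (dBarL R (toFM R u)) (dBarL R (toFM R v)) := by
  have hterm (s : Word α × Word α) (hs : s ∈ splits u) :
      (splits v).map (fun t => mul2hat R (toFM2 R s) (toFM2 R t)) =
        (splits v).map fun t => (((shuffles s.1 t.1).bind fun x =>
          (shuffles s.2 t.2).map fun y => (x, y)).map (toFM2 R)).sum := by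
    refine Multiset.map_congr rfl fun t ht => ?_
    rw [← append_of_mem_splits hs, ← append_of_mem_splits ht] at h
    exact mul2hat_toFM2 R
      (fun a ha b hb => h a (List.mem_append_right _ ha) b (List.mem_append_right _ hb))
      (fun a ha b hb => h a (List.mem_append_left _ ha) b (List.mem_append_left _ hb))
  calc dBarL R (hatL R (toFM R u) (toFM R v))
    _ = (((shuffles u v).bind splits).map (toFM2 R)).sum := by
        rw [hatL_toFM R h, map_multiset_sum, Multiset.map_map, Multiset.map_bind,
          Multiset.sum_bind]
        simp only [Function.comp_def, dBarL_toFM]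
    _ = ((splits u).map fun s =>
          ((splits v).map fun t => mul2hat R (toFM2 R s) (toFM2 R t)).sum).sum := by
        rw [splits_shuffles, Multiset.map_bind, Multiset.sum_bind]
        refine congrArg Multiset.sum (Multiset.map_congr rfl fun s hs => ?_)
        rw [hterm s hs, Multiset.map_bind, Multiset.sum_bind]
    _ = mul2hat R (dBarL R (toFM R u)) (dBarL R (toFM R v)) := by
        rw [dBarL_toFM R u, ← LinearMap.flip_apply, map_multiset_sum, Multiset.map_map]
        simp only [Function.comp_def, LinearMap.flip_apply]
        simp only [dBarL_toFM, map_multiset_sum, Multiset.map_map, Function.comp_def]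

theorem counitL_hatL_toFM {u v : Word α} (h : ∀ a ∈ u, ∀ b ∈ v, a < b) :
    counitL R (hatL R (toFM R u) (toFM R v)) =
      counitL R (toFM R u) * counitL R (toFM R v) := by
  rw [hatL_toFM R h, map_multiset_sum, Multiset.map_map]
  cases u <;> cases v <;> simp [counitL_toFM, shuffles_cons_cons]

end Compatibility

end Word

theorem dBarL_hatL {p q : ℕ} {P Q : SC} (hP : IsSetComp p P) (hQ : IsSetComp q Q) :
    dBarL R (hatL R (Finsupp.single P 1) (Finsupp.single Q 1)) =
      mul2hat R (dBarL R (Finsupp.single P 1)) (dBarL R (Finsupp.single Q 1)) := by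
  obtain ⟨u, v, rfl, rfl, h⟩ := hP.exists_words hQ
  exact dBarL_hatL_toFM R h

theorem counitL_hatL {p q : ℕ} {P Q : SC} (hP : IsSetComp p P) (hQ : IsSetComp q Q) :
    counitL R (hatL R (Finsupp.single P 1) (Finsupp.single Q 1)) =
      counitL R (Finsupp.single P 1) * counitL R (Finsupp.single Q 1) := by
  obtain ⟨u, v, rfl, rfl, h⟩ := hP.exists_words hQ
  exact counitL_hatL_toFM R h

/-! ### The antipode -/

/-- The ring structure on `T_•` given by the symmetrized product `∗̂`. -/
noncomputable instance : Ring (Tspan R) where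
  __ := (inferInstance : AddCommGroup (Tspan R))
  mul x y := ⟨hatL R x y, hatL_mem_Tspan R x.2 y.2⟩
  one := ⟨Finsupp.single [] 1, Submodule.subset_span ⟨0, [], by simp [IsSetComp, ground], rfl⟩⟩
  mul_assoc x y z := Subtype.ext (hatL_assoc R x.2 y.2 z.2)
  one_mul x := Subtype.ext (one_hatL R x.2)
  mul_one x := Subtype.ext (hatL_one R x.2)
  left_distrib x y z := Subtype.ext ((hatL R x).map_add y z)
  right_distrib x y z := Subtype.ext ((hatL R).map_add₂ x y z)
  zero_mul x := Subtype.ext ((hatL R).map_zero₂ x)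
  mul_zero x := Subtype.ext (hatL R x).map_zero

theorem coe_mul_Tspan (x y : Tspan R) : ((x * y : Tspan R) : FM R) = hatL R x y := rfl

theorem coe_one_Tspan : ((1 : Tspan R) : FM R) = Finsupp.single [] 1 := rfl

open Classical in
/-- The basis element `P` as an element of `T_•`, with junk value `0` unless `P` is a set
composition. -/
noncomputable def ofSC (P : SC) : Tspan R :=
  if h : ∃ n, IsSetComp n P then
    ⟨Finsupp.single P 1, Submodule.subset_span ⟨h.choose, P, h.choose_spec, rfl⟩⟩
  else 0

/-- The antipode on set compositions of `[n]`, by recursion on `n`: the solution of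
`Σ_p S(P|_{[p]}) ∗̂ P|_{{p+1,…,n}} = 0` for `n > 0`. -/
noncomputable def antipodeSC : ℕ → SC → Tspan R
  | 0, _ => 1
  | n + 1, P =>
    -∑ p : Fin (n + 1),
      antipodeSC p (restrictSC (Icc 1 p) P) * ofSC R (restrictSC (Icc (p + 1) (n + 1)) P)

/-- The antipode of `T_•`, as a linear map on the ambient free module. -/
noncomputable def antipode : FM R →ₗ[R] FM R :=
  Finsupp.lift _ R SC fun P => (antipodeSC R (maxG P) P : FM R)

namespace Word

variable {α : Type*} [LinearOrder α]

/-- The element of `T_•` encoded by a word. -/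
noncomputable def toTspan (w : Word α) : Tspan R := ofSC R (toSetComp w)

/-- The antipode of the element of `T_•` encoded by a word. -/
noncomputable def antipodeWord (w : Word α) : Tspan R := antipodeSC R w.length (toSetComp w)

theorem coe_toTspan (w : Word α) : (toTspan R w : FM R) = toFM R w := by
  rw [toTspan, ofSC, dif_pos ⟨_, isSetComp_toSetComp w⟩, toFM]

theorem toTspan_nil : toTspan R ([] : Word α) = 1 :=
  Subtype.ext (by rw [coe_toTspan, toFM_nil, coe_one_Tspan])

theorem antipode_toFM (w : Word α) : antipode R (toFM R w) = antipodeWord R w := by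
  simp only [antipode, toFM, Finsupp.lift_apply, zero_smul, Finsupp.sum_single_index, one_smul,
    maxG_toSetComp, antipodeWord]

theorem conv_antipodeWord_toTspan :
    conv (antipodeWord R) (toTspan R) = (convOne : Word α → Tspan R) := by
  ext1 w
  cases w with
  | nil => simp [conv, convOne, splits, antipodeWord, antipodeSC, toTspan_nil]
  | cons a w =>
    have hsum := sum_range_restrictSC (fun p P Q => antipodeSC R p P * ofSC R Q) (a :: w)
    refine hsum.symm.trans ?_
    have hone : restrictSC (Icc 1 (w.length + 1)) (toSetComp (a :: w)) = toSetComp (a :: w) :=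
      restrictSC_Icc_one [] (a :: w)
    have hsucc : restrictSC (Icc (w.length + 2) (w.length + 1)) (toSetComp (a :: w)) =
        toSetComp ([] : Word α) := restrictSC_Icc_succ [] (a :: w)
    rw [List.length_cons, sum_range_succ, hone, hsucc, ← toTspan, toTspan_nil, mul_one,
      antipodeSC, ← Fin.sum_univ_eq_sum_range fun p =>
        antipodeSC R p (restrictSC (Icc 1 p) (toSetComp (a :: w))) *
          ofSC R (restrictSC (Icc (p + 1) (w.length + 1)) (toSetComp (a :: w))), add_neg_cancel,
      convOne, if_neg (List.cons_ne_nil a w)]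

theorem conv_toTspan_antipodeWord :
    conv (toTspan R) (antipodeWord R) = (convOne : Word α → Tspan R) :=
  conv_eq_convOne_symm (by rw [toTspan_nil]; exact isUnit_one) (conv_antipodeWord_toTspan R)

theorem convHatFst_toFM2 (S : FM R →ₗ[R] FM R) (s : Word α × Word α) :
    convHatFst R S (toFM2 R s) = hatL R (S (toFM R s.1)) (toFM R s.2) := by
  simp [convHatFst, toFM2, toFM]

theorem convHatSnd_toFM2 (S : FM R →ₗ[R] FM R) (s : Word α × Word α) :
    convHatSnd R S (toFM2 R s) = hatL R (toFM R s.1) (S (toFM R s.2)) := by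
  simp [convHatSnd, toFM2, toFM]

theorem coe_convOne (w : Word α) :
    ((convOne w : Tspan R) : FM R) = counitL R (toFM R w) • Finsupp.single [] 1 := by
  rw [counitL_toFM, convOne]
  split_ifs <;> simp [coe_one_Tspan]

theorem convHatFst_dBarL (w : Word α) :
    convHatFst R (antipode R) (dBarL R (toFM R w)) = conv (antipodeWord R) (toTspan R) w := by
  rw [dBarL_toFM, conv, map_multiset_sum, ← Submodule.coe_subtype, map_multiset_sum,
    Multiset.map_map, Multiset.map_map]
  simp [convHatFst_toFM2, coe_mul_Tspan, antipode_toFM, coe_toTspan, Function.comp_def]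

theorem convHatSnd_dBarL (w : Word α) :
    convHatSnd R (antipode R) (dBarL R (toFM R w)) = conv (toTspan R) (antipodeWord R) w := by
  rw [dBarL_toFM, conv, map_multiset_sum, ← Submodule.coe_subtype, map_multiset_sum,
    Multiset.map_map, Multiset.map_map]
  simp [convHatSnd_toFM2, coe_mul_Tspan, antipode_toFM, coe_toTspan, Function.comp_def]

end Word

theorem convHat_antipode {n : ℕ} {P : SC} (hP : IsSetComp n P) :
    convHatFst R (antipode R) (dBarL R (Finsupp.single P 1)) =
        counitL R (Finsupp.single P 1) • Finsupp.single [] 1 ∧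
      convHatSnd R (antipode R) (dBarL R (Finsupp.single P 1)) =
        counitL R (Finsupp.single P 1) • Finsupp.single [] 1 := by
  obtain ⟨w, rfl, -⟩ := hP.exists_word 0
  rw [← toFM, convHatFst_dBarL, convHatSnd_dBarL, conv_antipodeWord_toTspan,
    conv_toTspan_antipodeWord, coe_convOne]
  exact ⟨rfl, rfl⟩

theorem hat_bar_hopf_algebra_general :
    (∀ (p q : ℕ) (P Q : SC), IsSetComp p P → IsSetComp q Q →
        hatL R (Finsupp.single P 1) (Finsupp.single Q 1) ∈ Submodule.span R
          {f : FM R | ∃ U : SC, IsSetComp (p + q) U ∧ f = Finsupp.single U 1}) ∧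
    (∀ x y z : FM R, x ∈ Tspan R → y ∈ Tspan R → z ∈ Tspan R →
        hatL R (hatL R x y) z = hatL R x (hatL R y z)) ∧
    (∀ x : FM R, x ∈ Tspan R →
        hatL R (Finsupp.single ([] : SC) 1) x = x ∧
        hatL R x (Finsupp.single ([] : SC) 1) = x) ∧
    (∀ (n : ℕ) (P : SC), IsSetComp n P →
        applyFst R (dBarL R) (dBarL R (Finsupp.single P 1)) =
          applySnd R (dBarL R) (dBarL R (Finsupp.single P 1))) ∧
    (∀ (n : ℕ) (P : SC), IsSetComp n P →
        epsFst R (dBarL R (Finsupp.single P 1)) = Finsupp.single P 1 ∧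
        epsSnd R (dBarL R (Finsupp.single P 1)) = Finsupp.single P 1) ∧
    (∀ (p q : ℕ) (P Q : SC), IsSetComp p P → IsSetComp q Q →
        dBarL R (hatL R (Finsupp.single P 1) (Finsupp.single Q 1)) =
          mul2hat R (dBarL R (Finsupp.single P 1)) (dBarL R (Finsupp.single Q 1))) ∧
    (∀ (p q : ℕ) (P Q : SC), IsSetComp p P → IsSetComp q Q →
        counitL R (hatL R (Finsupp.single P 1) (Finsupp.single Q 1)) =
          counitL R (Finsupp.single P 1) * counitL R (Finsupp.single Q 1)) ∧
    counitL R (Finsupp.single ([] : SC) 1) = 1 ∧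
    (∀ P : SC, IsSetComp 0 P → P = []) ∧
    (∃ S : FM R →ₗ[R] FM R, ∀ (n : ℕ) (P : SC), IsSetComp n P →
        convHatFst R S (dBarL R (Finsupp.single P 1)) =
          counitL R (Finsupp.single P 1) • Finsupp.single ([] : SC) 1 ∧
        convHatSnd R S (dBarL R (Finsupp.single P 1)) =
          counitL R (Finsupp.single P 1) • Finsupp.single ([] : SC) 1) :=
  ⟨fun _ _ _ _ hP hQ => hatL_mem_span R hP hQ,
    fun _ _ _ hx hy hz => hatL_assoc R hx hy hz,
    fun _ hx => ⟨one_hatL R hx, hatL_one R hx⟩,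
    fun _ _ hP => dBarL_coassoc R hP,
    fun _ _ hP => dBarL_counit R hP,
    fun _ _ _ _ hP hQ => dBarL_hatL R hP hQ,
    fun _ _ _ _ hP hQ => counitL_hatL R hP hQ,
    counitL_one R,
    fun _ hP => hP.eq_nil,
    antipode R, fun _ _ hP => convHat_antipode R hP⟩

/-- **Theorem.** `(T_•, ∗̂, δ̄)` is a graded connected Hopf algebra over ℤ:
`∗̂` is a graded associative unital product, `δ̄` is a coassociative counital
coproduct, `δ̄` and the counit are algebra homomorphisms, and an antipode
exists. -/
theorem hat_bar_hopf_algebra :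
    -- graded associative unital algebra
    (∀ (p q : ℕ) (P Q : SC), IsSetComp p P → IsSetComp q Q →
        hatL ℤ (Finsupp.single P 1) (Finsupp.single Q 1) ∈ Submodule.span ℤ
          {f : FM ℤ | ∃ U : SC, IsSetComp (p + q) U ∧ f = Finsupp.single U 1}) ∧
    (∀ x y z : FM ℤ, x ∈ Tspan ℤ → y ∈ Tspan ℤ → z ∈ Tspan ℤ →
        hatL ℤ (hatL ℤ x y) z = hatL ℤ x (hatL ℤ y z)) ∧
    (∀ x : FM ℤ, x ∈ Tspan ℤ →
        hatL ℤ (Finsupp.single ([] : SC) 1) x = x ∧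
        hatL ℤ x (Finsupp.single ([] : SC) 1) = x) ∧
    -- coassociative counital coproduct
    (∀ (n : ℕ) (P : SC), IsSetComp n P →
        applyFst ℤ (dBarL ℤ) (dBarL ℤ (Finsupp.single P 1)) =
          applySnd ℤ (dBarL ℤ) (dBarL ℤ (Finsupp.single P 1))) ∧
    (∀ (n : ℕ) (P : SC), IsSetComp n P →
        epsFst ℤ (dBarL ℤ (Finsupp.single P 1)) = Finsupp.single P 1 ∧
        epsSnd ℤ (dBarL ℤ (Finsupp.single P 1)) = Finsupp.single P 1) ∧
    -- δ̄ is an algebra homomorphism: δ̄(x ∗̂ y) = δ̄(x) · δ̄(y)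
    (∀ (p q : ℕ) (P Q : SC), IsSetComp p P → IsSetComp q Q →
        dBarL ℤ (hatL ℤ (Finsupp.single P 1) (Finsupp.single Q 1)) =
          mul2hat ℤ (dBarL ℤ (Finsupp.single P 1)) (dBarL ℤ (Finsupp.single Q 1))) ∧
    -- the counit is an algebra homomorphism
    (∀ (p q : ℕ) (P Q : SC), IsSetComp p P → IsSetComp q Q →
        counitL ℤ (hatL ℤ (Finsupp.single P 1) (Finsupp.single Q 1)) =
          counitL ℤ (Finsupp.single P 1) * counitL ℤ (Finsupp.single Q 1)) ∧
    counitL ℤ (Finsupp.single ([] : SC) 1) = 1 ∧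
    -- connectedness: the degree-0 component is spanned by the empty composition
    (∀ P : SC, IsSetComp 0 P → P = []) ∧
    -- an antipode exists
    (∃ S : FM ℤ →ₗ[ℤ] FM ℤ, ∀ (n : ℕ) (P : SC), IsSetComp n P →
        convHatFst ℤ S (dBarL ℤ (Finsupp.single P 1)) =
          counitL ℤ (Finsupp.single P 1) • Finsupp.single ([] : SC) 1 ∧
        convHatSnd ℤ S (dBarL ℤ (Finsupp.single P 1)) =
          counitL ℤ (Finsupp.single P 1) • Finsupp.single ([] : SC) 1) :=
  hat_bar_hopf_algebra_general ℤ
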